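/- arXiv:2108.13849 — 3 statements merged into one kernel-verified Lean document; each statement's English description precedes it below -/
import Mathlib

section
/- For every c ∈ k, the action of g − 1 on the Verma module M_{1,c} is locally nilpotent: for every m ∈ M_{1,c} there exists n ∈ ℕ such that (g−1)^n · m = 0. -/
open FreeAlgebra

/-- Generators of the double of the Jordan plane. -/
inductive JGen : Type
  | u | v | zeta | g | ginv | x | y

variable (k : Type) [Field k] [IsAlgClosed k] [CharZero k]

/-- The defining relations of the double of the Jordan plane. -/
inductive JRel : FreeAlgebra k JGen → FreeAlgebra k JGen → Prop
  | gginv : JRel (ι k .g * ι k .ginv) 1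
  | ginvg : JRel (ι k .ginv * ι k .g) 1
  | zg : JRel (ι k .zeta * ι k .g) (ι k .g * ι k .zeta)
  | gx : JRel (ι k .g * ι k .x) (ι k .x * ι k .g)
  | gy : JRel (ι k .g * ι k .y) (ι k .y * ι k .g + ι k .x * ι k .g)
  | zy : JRel (ι k .zeta * ι k .y) (ι k .y * ι k .zeta + ι k .y)
  | zx : JRel (ι k .zeta * ι k .x) (ι k .x * ι k .zeta + ι k .x)
  | ug : JRel (ι k .u * ι k .g) (ι k .g * ι k .u)
  | vg : JRel (ι k .v * ι k .g) (ι k .g * ι k .v + ι k .g * ι k .u)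
  | vz : JRel (ι k .v * ι k .zeta) (ι k .zeta * ι k .v + ι k .v)
  | uz : JRel (ι k .u * ι k .zeta) (ι k .zeta * ι k .u + ι k .u)
  | yx : JRel (ι k .y * ι k .x) (ι k .x * ι k .y - (1/2 : k) • (ι k .x * ι k .x))
  | vu : JRel (ι k .v * ι k .u) (ι k .u * ι k .v - (1/2 : k) • (ι k .u * ι k .u))
  | ux : JRel (ι k .u * ι k .x) (ι k .x * ι k .u)
  | vx : JRel (ι k .v * ι k .x) (ι k .x * ι k .v + (1 - ι k .g) + ι k .x * ι k .u)
  | uy : JRel (ι k .u * ι k .y) (ι k .y * ι k .u + (1 - ι k .g))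
  | vy : JRel (ι k .v * ι k .y) (ι k .y * ι k .v - ι k .g * ι k .zeta + ι k .y * ι k .u)

/-- The double of the Jordan plane, as the presented algebra. -/
def D : Type := RingQuot (JRel k)

noncomputable instance : Ring (D k) := inferInstanceAs (Ring (RingQuot (JRel k)))
noncomputable instance : Algebra k (D k) := inferInstanceAs (Algebra k (RingQuot (JRel k)))

/-- The canonical projection from the free algebra onto `D`. -/
noncomputable def Dmk : FreeAlgebra k JGen →ₐ[k] D k := RingQuot.mkAlgHom k (JRel k)

noncomputable def DU : D k := Dmk k (ι k .u)
noncomputable def DV : D k := Dmk k (ι k .v)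
noncomputable def DZ : D k := Dmk k (ι k .zeta)
noncomputable def DG : D k := Dmk k (ι k .g)
noncomputable def DGinv : D k := Dmk k (ι k .ginv)
noncomputable def DX : D k := Dmk k (ι k .x)
noncomputable def DY : D k := Dmk k (ι k .y)

set_option synthInstance.maxHeartbeats 1000000
set_option maxHeartbeats 2000000

/-- The left ideal of `D` generated by `g - a`, `ζ + c/2`, `u`, `v`. -/
noncomputable def MIdeal (a c : k) : Submodule (D k) (D k) :=
  Submodule.span (D k)
    {DG k - algebraMap k (D k) a, DZ k + algebraMap k (D k) (c / 2), DU k, DV k}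

/-- The Verma module `M_{a,c} = D ⊗_{D^{≥0}} T_{a,c}`, realized as the quotient of `D` by the
left ideal generated by `g - a`, `ζ + c/2`, `u`, `v` (the annihilator in `D^{≥0}` of the
generator `z_{a,c}` of `T_{a,c}`, on which `g` acts by `a`, `ζ` by `-c/2`, and `u`, `v` by `0`).
The class of `1` corresponds to `1 ⊗ z_{a,c}`. -/
noncomputable abbrev Mver (a c : k) : Type := (D k) ⧸ (MIdeal k a c)

/-- The class of `d ∈ D` in `M_{a,c}`. -/
noncomputable def mmk (a c : k) : D k → Mver k a c := Submodule.Quotient.mk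

/-! Since `[g, y] = xg`, `[g, v] = -gu` and `g` commutes with `x`, `u` and the remaining generators,
`(ad g)²` kills every generator of `D`. By the Leibniz rule for `ad g`, each generator, hence all of
`D`, preserves every generalized eigenspace of `g` in a `D`-module. A module generated by an
`a`-eigenvector of `g`, such as `M_{a,c}`, is therefore equal to the generalized `a`-eigenspace. -/

section AdLocallyNilpotent

attribute [local instance 100] LieRing.ofAssociativeRing

open LieAlgebra Module.End

theorem mem_maxGenEigenspace_ad_zero_of_lie_lie_eq_zero {R L : Type*} [CommRing R] [LieRing L]
    [LieAlgebra R L] {x y : L} (h : ⁅x, ⁅x, y⁆⁆ = 0) : y ∈ (ad R L x).maxGenEigenspace 0 :=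
  (mem_maxGenEigenspace _ _ _).mpr ⟨2, by simpa [pow_two] using h⟩

section AssociativeAlgebra

variable {R A M : Type*} [CommRing R] [Ring A] [Algebra R A]
  [AddCommGroup M] [Module R M] [Module A M] [IsScalarTower R A M]

theorem mem_maxGenEigenspace_lsmul {a : A} {μ : R} {m : M} :
    m ∈ (Algebra.lsmul R R M a).maxGenEigenspace μ ↔
      ∃ n : ℕ, (a - algebraMap R A μ) ^ n • m = 0 := by
  have lsmul_sub_smul_one :
      Algebra.lsmul R R M a - μ • 1 = Algebra.lsmul R R M (a - algebraMap R A μ) := by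
    rw [map_sub, AlgHom.commutes, Algebra.algebraMap_eq_smul_one]
  simp only [mem_maxGenEigenspace, lsmul_sub_smul_one, ← map_pow, Algebra.lsmul_coe]

theorem smul_mem_maxGenEigenspace_lsmul {a d : A} {μ : R} {m : M}
    (hd : d ∈ (ad R A a).maxGenEigenspace 0)
    (hm : m ∈ (Algebra.lsmul R R M a).maxGenEigenspace μ) :
    d • m ∈ (Algebra.lsmul R R M a).maxGenEigenspace μ := by
  let _ : LieRingModule A M := LieRingModule.ofAssociativeModule
  have _ : LieModule R A M := LieModule.ofAssociativeModule
  have lie_mem := LieModule.lie_mem_maxGenEigenspace_toEnd hd hm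
  rw [zero_add] at lie_mem
  exact lie_mem

theorem smul_mem_maxGenEigenspace_lsmul_of_mem_adjoin {s : Set A} {a d : A} {μ : R} {m : M}
    (hs : s ⊆ (ad R A a).maxGenEigenspace 0) (hd : d ∈ Algebra.adjoin R s)
    (hm : m ∈ (Algebra.lsmul R R M a).maxGenEigenspace μ) :
    d • m ∈ (Algebra.lsmul R R M a).maxGenEigenspace μ := by
  induction hd using Algebra.adjoin_induction generalizing m with
  | mem d hd => exact smul_mem_maxGenEigenspace_lsmul (hs hd) hm
  | algebraMap r => simpa only [algebraMap_smul] using Submodule.smul_mem _ r hm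
  | add d e _ _ ihd ihe => simpa only [add_smul] using add_mem (ihd hm) (ihe hm)
  | mul d e _ _ ihd ihe => simpa only [mul_smul] using ihd (ihe hm)

theorem maxGenEigenspace_lsmul_eq_top {s : Set A} {a : A} {μ : R} {z : M}
    (hs : s ⊆ (ad R A a).maxGenEigenspace 0) (adjoin_eq_top : Algebra.adjoin R s = ⊤)
    (span_eq_top : Submodule.span A {z} = ⊤)
    (hz : z ∈ (Algebra.lsmul R R M a).maxGenEigenspace μ) :
    (Algebra.lsmul R R M a).maxGenEigenspace μ = ⊤ := by
  refine eq_top_iff.mpr fun m _ => ?_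
  obtain ⟨d, rfl⟩ := (Submodule.span_singleton_eq_top_iff A z).mp span_eq_top m
  exact smul_mem_maxGenEigenspace_lsmul_of_mem_adjoin hs (adjoin_eq_top ▸ Algebra.mem_top) hz

end AssociativeAlgebra

section JordanDouble

variable {K : Type} [Field K]

theorem Dmk_eq_of_JRel {p q : FreeAlgebra K JGen} (h : JRel K p q) :
    Dmk K p = Dmk K q :=
  RingQuot.mkAlgHom_rel K h

variable (K)

theorem adjoin_range_Dmk_ι : Algebra.adjoin K (Set.range fun s => Dmk K (ι K s)) = ⊤ := by
  have Dmk_surjective : Function.Surjective (Dmk K) := RingQuot.mkAlgHom_surjective K (JRel K)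
  rw [← (AlgHom.range_eq_top _).mpr Dmk_surjective, ← Algebra.map_top, ← adjoin_range_ι,
    AlgHom.map_adjoin, ← Set.range_comp, Function.comp_def]

theorem commute_DG_DX : Commute (DG K) (DX K) := by
  simpa only [commute_iff_eq, DG, DX, map_mul] using Dmk_eq_of_JRel (K := K) .gx

theorem commute_DG_DU : Commute (DG K) (DU K) := by
  simpa only [commute_iff_eq, DG, DU, map_mul] using (Dmk_eq_of_JRel (K := K) .ug).symm

theorem commute_DG_DZ : Commute (DG K) (DZ K) := by
  simpa only [commute_iff_eq, DG, DZ, map_mul] using (Dmk_eq_of_JRel (K := K) .zg).symm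

theorem commute_DG_DGinv : Commute (DG K) (DGinv K) := by
  simpa only [commute_iff_eq, DG, DGinv, map_mul] using
    (Dmk_eq_of_JRel (K := K) .gginv).trans (Dmk_eq_of_JRel .ginvg).symm

theorem lie_DG_DY : ⁅DG K, DY K⁆ = DX K * DG K := by
  have gy : DG K * DY K = DY K * DG K + DX K * DG K := by
    simpa only [DG, DX, DY, map_mul, map_add] using Dmk_eq_of_JRel (K := K) .gy
  rw [Ring.lie_def, gy, add_sub_cancel_left]

theorem lie_DG_DV : ⁅DG K, DV K⁆ = -(DG K * DU K) := by
  have vg : DV K * DG K = DG K * DV K + DG K * DU K := by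
    simpa only [DG, DU, DV, map_mul, map_add] using Dmk_eq_of_JRel (K := K) .vg
  rw [Ring.lie_def, vg, sub_add_cancel_left]

theorem lie_DG_lie_DG_Dmk_ι (s : JGen) : ⁅DG K, ⁅DG K, Dmk K (ι K s)⁆⁆ = 0 := by
  have lie_lie_of_commute {d : D K} (h : Commute (DG K) d) : ⁅DG K, ⁅DG K, d⁆⁆ = 0 := by
    rw [h.lie_eq, lie_zero]
  cases s with
  | g => exact lie_lie_of_commute (Commute.refl _)
  | ginv => exact lie_lie_of_commute (commute_DG_DGinv K)
  | zeta => exact lie_lie_of_commute (commute_DG_DZ K)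
  | x => exact lie_lie_of_commute (commute_DG_DX K)
  | u => exact lie_lie_of_commute (commute_DG_DU K)
  | y =>
    change ⁅DG K, ⁅DG K, DY K⁆⁆ = 0
    rw [lie_DG_DY]
    exact ((commute_DG_DX K).mul_right (Commute.refl _)).lie_eq
  | v =>
    change ⁅DG K, ⁅DG K, DV K⁆⁆ = 0
    rw [lie_DG_DV]
    exact ((Commute.refl _).mul_right (commute_DG_DU K)).neg_right.lie_eq

theorem span_mmk_one (a c : K) : Submodule.span (D K) {mmk K a c 1} = ⊤ := by
  refine (Submodule.span_singleton_eq_top_iff _ _).mpr fun m => ?_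
  obtain ⟨d, rfl⟩ := Submodule.Quotient.mk_surjective _ m
  exact ⟨d, by rw [mmk, ← Submodule.Quotient.mk_smul, smul_eq_mul, mul_one]⟩

theorem DG_sub_algebraMap_smul_mmk_one (a c : K) :
    (DG K - algebraMap K (D K) a) • mmk K a c 1 = 0 := by
  rw [mmk, ← Submodule.Quotient.mk_smul, Submodule.Quotient.mk_eq_zero, smul_eq_mul, mul_one]
  exact Submodule.subset_span (Set.mem_insert _ _)

theorem g_sub_one_locally_nilpotent_general (a c : K) (m : Mver K a c) :
    ∃ n : ℕ, (DG K - algebraMap K (D K) a) ^ n • m = 0 := by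
  have generators_ad_nilpotent :
      (Set.range fun s => Dmk K (ι K s)) ⊆ (ad K (D K) (DG K)).maxGenEigenspace 0 :=
    Set.range_subset_iff.mpr fun s =>
      mem_maxGenEigenspace_ad_zero_of_lie_lie_eq_zero (lie_DG_lie_DG_Dmk_ι K s)
  have mmk_one_mem :
      mmk K a c 1 ∈ (Algebra.lsmul K K (Mver K a c) (DG K)).maxGenEigenspace a :=
    mem_maxGenEigenspace_lsmul.mpr ⟨1, by rw [pow_one, DG_sub_algebraMap_smul_mmk_one]⟩
  have eq_top := maxGenEigenspace_lsmul_eq_top generators_ad_nilpotent (adjoin_range_Dmk_ι K)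
    (span_mmk_one K a c) mmk_one_mem
  exact mem_maxGenEigenspace_lsmul.mp (eq_top ▸ Submodule.mem_top)

end JordanDouble

end AdLocallyNilpotent

/-- for every `c ∈ k`, the action of `g - 1` on the Verma module `M_{1,c}` is
locally nilpotent. -/
theorem g_sub_one_locally_nilpotent (c : k) (m : Mver k 1 c) :
    ∃ n : ℕ, ((DG k - 1) ^ n) • m = 0 := by
  simpa only [map_one] using g_sub_one_locally_nilpotent_general k 1 c m
end

section
/- Let M be a finite-dimensional D-module with associated representation ρ : D → End(M). Then the operators ρ(g − 1), ρ(x) and ρ(u) are nilpotent. -/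
open FreeAlgebra

variable (k : Type) [Field k] [IsAlgClosed k] [CharZero k]

set_option synthInstance.maxHeartbeats 1000000
set_option maxHeartbeats 2000000

/-!
The relations `[ζ, x] = x` and `[ζ, u] = -u` make every nonzero power of `ρ(x)` and of `ρ(u)` an
eigenvector of `[ρ(ζ), ·]` on `End M`, with eigenvalues `n` and `-n` respectively; since `End M` is
finite-dimensional, only finitely many powers are nonzero. The commutator `[u, y] = 1 - g` commutes
with `u`, so Jacobson's lemma applies: `[ρ(u), ·]` is a nilpotent derivation of `End M` whose `n`-th
power takes `ρ(y) ^ n` to `n! ρ(1 - g) ^ n`, which forces `ρ(1 - g)` to be nilpotent.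
-/

attribute [local instance] LieRing.ofAssociativeRing

section Ring

variable {A : Type*} [Ring A]

theorem map_ring_lie {B F : Type*} [Ring B] [FunLike F A B] [RingHomClass F A B] (f : F)
    (a b : A) : f ⁅a, b⁆ = ⁅f a, f b⁆ := by
  simp only [Ring.lie_def, map_sub, map_mul]

theorem ring_lie_mul (a b c : A) : ⁅a, b * c⁆ = ⁅a, b⁆ * c + b * ⁅a, c⁆ := by
  simp only [Ring.lie_def]
  noncomm_ring

end Ring

section Algebra

variable {R A : Type*} [CommRing R] [Ring A] [Algebra R A]

theorem lie_pow_eq_smul {z a : A} {c : R} (h : ⁅z, a⁆ = c • a) (n : ℕ) :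
    ⁅z, a ^ n⁆ = (n * c) • a ^ n := by
  induction n with
  | zero => simp [Ring.lie_def]
  | succ n ih =>
    rw [pow_succ, ring_lie_mul, ih, h, smul_mul_assoc, mul_smul_comm, ← add_smul, Nat.cast_succ,
      add_one_mul]

theorem isNilpotent_of_lie_eq_smul [IsDomain R] [CharZero R] [Module.IsTorsionFree R A]
    [Module.Finite R A] {z a : A} {c : R} (hc : c ≠ 0) (h : ⁅z, a⁆ = c • a) : IsNilpotent a := by
  by_contra ha
  have hasEigenvalue (n : ℕ) : (LieAlgebra.ad R A z).HasEigenvalue (n * c) :=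
    Module.End.hasEigenvalue_of_hasEigenvector (x := a ^ n)
      ⟨Module.End.mem_eigenspace_iff.2 (lie_pow_eq_smul h n), fun han => ha ⟨n, han⟩⟩
  have injective : Function.Injective fun n : ℕ => n * c :=
    (mul_left_injective₀ hc).comp Nat.cast_injective
  exact Set.infinite_of_injective_forall_mem injective hasEigenvalue
    (Module.End.finite_hasEigenvalue _)

variable (R)

theorem ad_pow_succ_apply_mul {a b : A} (h : Commute a ⁅a, b⁆) (r : A) (n : ℕ) :
    (LieAlgebra.ad R A a ^ (n + 1)) (b * r) =
      b * (LieAlgebra.ad R A a ^ (n + 1)) r + (n + 1) • (⁅a, b⁆ * (LieAlgebra.ad R A a ^ n) r) := by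
  have lie_lie_mul (s : A) : ⁅a, ⁅a, b⁆ * s⁆ = ⁅a, b⁆ * ⁅a, s⁆ := by
    rw [ring_lie_mul, h.lie_eq, zero_mul, zero_add]
  induction n with
  | zero => simp [ring_lie_mul, add_comm]
  | succ n ih =>
    rw [pow_succ', Module.End.mul_apply, ih, map_add, map_nsmul]
    simp only [LieAlgebra.ad_apply, ring_lie_mul a b, lie_lie_mul, pow_succ' _ n,
      Module.End.mul_apply]
    rw [succ_nsmul _ (n + 1)]
    abel

theorem ad_pow_apply_pow {a b : A} (h : Commute a ⁅a, b⁆) (n : ℕ) :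
    (LieAlgebra.ad R A a ^ n) (b ^ n) = n.factorial • ⁅a, b⁆ ^ n := by
  induction n with
  | zero => simp
  | succ n ih =>
    have ad_pow_succ_eq_zero : (LieAlgebra.ad R A a ^ (n + 1)) (b ^ n) = 0 := by
      rw [pow_succ', Module.End.mul_apply, ih, map_nsmul, LieAlgebra.ad_apply,
        (h.pow_right n).lie_eq, nsmul_zero]
    rw [pow_succ' b, ad_pow_succ_apply_mul R h, ad_pow_succ_eq_zero, ih, mul_zero, zero_add,
      mul_smul_comm, ← pow_succ', smul_smul, Nat.factorial_succ]

end Algebra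

theorem isNilpotent_lie_of_commute {A : Type*} [Ring A] [IsAddTorsionFree A] {a b : A}
    (ha : IsNilpotent a) (h : Commute a ⁅a, b⁆) : IsNilpotent ⁅a, b⁆ := by
  obtain ⟨n, hn⟩ := LieAlgebra.ad_nilpotent_of_nilpotent (R := ℤ) ha
  have factorial_nsmul_eq_zero : n.factorial • ⁅a, b⁆ ^ n = 0 := by
    rw [← ad_pow_apply_pow ℤ h, hn, LinearMap.zero_apply]
  exact ⟨n, (nsmul_eq_zero_iff_right n.factorial_ne_zero).1 factorial_nsmul_eq_zero⟩

theorem isNilpotent_lsmul_iff {R B M : Type*} [CommSemiring R] [Semiring B] [Algebra R B]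
    [AddCommMonoid M] [Module R M] [Module B M] [IsScalarTower R B M] {b : B} :
    IsNilpotent (Algebra.lsmul R R M b) ↔ ∃ n : ℕ, ∀ m : M, b ^ n • m = 0 := by
  simp only [IsNilpotent, ← map_pow, LinearMap.ext_iff, Algebra.lsmul_apply, LinearMap.zero_apply]

section JordanDouble

variable (K : Type) [Field K]

variable {K} in
theorem Dmk_eq_of_rel {a b : FreeAlgebra K JGen} (h : JRel K a b) : Dmk K a = Dmk K b :=
  RingQuot.mkAlgHom_rel K h

theorem lie_DZ_DX : ⁅DZ K, DX K⁆ = DX K := by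
  rw [Ring.lie_def, sub_eq_iff_eq_add']
  simpa only [map_mul, map_add] using! Dmk_eq_of_rel (JRel.zx (k := K))

theorem lie_DZ_DU : ⁅DZ K, DU K⁆ = -DU K := by
  rw [Ring.lie_def, sub_eq_iff_eq_add', ← sub_eq_add_neg, eq_sub_iff_add_eq]
  simpa only [map_mul, map_add] using! (Dmk_eq_of_rel (JRel.uz (k := K))).symm

theorem commute_DU_DG : Commute (DU K) (DG K) := by
  simpa only [map_mul] using! Dmk_eq_of_rel (JRel.ug (k := K))

theorem lie_DU_DY : ⁅DU K, DY K⁆ = 1 - DG K := by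
  rw [Ring.lie_def, sub_eq_iff_eq_add']
  simpa only [map_mul, map_add, map_sub, map_one] using! Dmk_eq_of_rel (JRel.uy (k := K))

variable [CharZero K]

theorem g_x_u_act_nilpotently_general (M : Type*) [AddCommGroup M] [Module K M] [Module (D K) M]
    [IsScalarTower K (D K) M] [FiniteDimensional K M] :
    (∃ n : ℕ, ∀ m : M, (DG K - 1) ^ n • m = 0) ∧
    (∃ n : ℕ, ∀ m : M, DX K ^ n • m = 0) ∧
    (∃ n : ℕ, ∀ m : M, DU K ^ n • m = 0) := by
  simp only [← isNilpotent_lsmul_iff (R := K)]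
  let ρ : D K →ₐ[K] Module.End K M := Algebra.lsmul K K M
  have hx : IsNilpotent (ρ (DX K)) :=
    isNilpotent_of_lie_eq_smul (z := ρ (DZ K)) (one_ne_zero (α := K)) <| by
      rw [← map_ring_lie, lie_DZ_DX, one_smul]
  have hu : IsNilpotent (ρ (DU K)) :=
    isNilpotent_of_lie_eq_smul (z := ρ (DZ K)) (neg_ne_zero.2 (one_ne_zero (α := K))) <| by
      rw [← map_ring_lie, lie_DZ_DU, map_neg, neg_one_smul]
  have lie_u_y : ⁅ρ (DU K), ρ (DY K)⁆ = ρ (1 - DG K) := by rw [← map_ring_lie, lie_DU_DY]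
  have commute_u_lie : Commute (ρ (DU K)) ⁅ρ (DU K), ρ (DY K)⁆ := by
    rw [lie_u_y]
    exact ((Commute.one_right _).sub_right (commute_DU_DG K)).map ρ
  have hg : IsNilpotent (ρ (DG K - 1)) := by
    have : IsAddTorsionFree (Module.End K M) := .of_isTorsionFree K _
    rw [← neg_sub, map_neg, isNilpotent_neg_iff, ← lie_u_y]
    exact isNilpotent_lie_of_commute hu commute_u_lie
  exact ⟨hg, hx, hu⟩

end JordanDouble

/-- on any finite-dimensional `D`-module, the operators given by the actions of
`g - 1`, `x` and `u` are nilpotent. -/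
theorem g_x_u_act_nilpotently (M : Type) (_ : AddCommGroup M) (_ : Module k M)
    (_ : Module (D k) M) (_ : IsScalarTower k (D k) M) (_ : FiniteDimensional k M) :
    (∃ n : ℕ, ∀ m : M, ((DG k - 1) ^ n) • m = 0) ∧
    (∃ n : ℕ, ∀ m : M, ((DX k) ^ n) • m = 0) ∧
    (∃ n : ℕ, ∀ m : M, ((DU k) ^ n) • m = 0) :=
  g_x_u_act_nilpotently_general k M
end

section
/- Let q = ux + 2 + 2g ∈ D. Then q commutes with x, u, g and ζ, and satisfies q y = (y + (1/2)x) q and q v = (v − (1/2)u) q; consequently q is a normal element of D, i.e. qD = Dq. Moreover the element z = q² g⁻¹ is central in D. -/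
open FreeAlgebra

variable (k : Type) [Field k] [IsAlgClosed k] [CharZero k]

set_option synthInstance.maxHeartbeats 1000000
set_option maxHeartbeats 2000000

/-!
Conjugation by `q` fixes `x`, `u`, `g`, `ζ` and translates `y` by `x / 2` and `v` by `-u / 2`;
conjugation by `g` fixes `x`, `u`, `g`, `ζ` and translates `y` by `x` and `v` by `-u`. So every
generator can be moved across `q` in either direction, which gives `qD = Dq`, and `q²` and `g`
have the same conjugation action on the generators, so `q² g⁻¹` is central.
-/

section Generators

variable {R A : Type*} [CommSemiring R] [Semiring A] [Algebra R A] {s : Set A} {q : A}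

theorem exists_semiconjBy_right_of_adjoin_eq_top (hs : Algebra.adjoin R s = ⊤)
    (hq : ∀ a ∈ s, ∃ b, SemiconjBy q a b) (a : A) : ∃ b, SemiconjBy q a b := by
  have ha : a ∈ Algebra.adjoin R s := hs ▸ Algebra.mem_top
  induction ha using Algebra.adjoin_induction with
  | mem a ha => exact hq a ha
  | algebraMap r => exact ⟨_, Algebra.commute_algebraMap_right r q⟩
  | add a₁ a₂ _ _ h₁ h₂ =>
    obtain ⟨b₁, h₁⟩ := h₁
    obtain ⟨b₂, h₂⟩ := h₂
    exact ⟨b₁ + b₂, h₁.add_right h₂⟩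
  | mul a₁ a₂ _ _ h₁ h₂ =>
    obtain ⟨b₁, h₁⟩ := h₁
    obtain ⟨b₂, h₂⟩ := h₂
    exact ⟨b₁ * b₂, h₁.mul_right h₂⟩

theorem exists_semiconjBy_left_of_adjoin_eq_top (hs : Algebra.adjoin R s = ⊤)
    (hq : ∀ b ∈ s, ∃ a, SemiconjBy q a b) (b : A) : ∃ a, SemiconjBy q a b := by
  have hb : b ∈ Algebra.adjoin R s := hs ▸ Algebra.mem_top
  induction hb using Algebra.adjoin_induction with
  | mem b hb => exact hq b hb
  | algebraMap r => exact ⟨_, Algebra.commute_algebraMap_right r q⟩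
  | add b₁ b₂ _ _ h₁ h₂ =>
    obtain ⟨a₁, h₁⟩ := h₁
    obtain ⟨a₂, h₂⟩ := h₂
    exact ⟨a₁ + a₂, h₁.add_right h₂⟩
  | mul b₁ b₂ _ _ h₁ h₂ =>
    obtain ⟨a₁, h₁⟩ := h₁
    obtain ⟨a₂, h₂⟩ := h₂
    exact ⟨a₁ * a₂, h₁.mul_right h₂⟩

theorem setOf_mul_left_eq_setOf_mul_right_of_adjoin_eq_top (hs : Algebra.adjoin R s = ⊤)
    (hright : ∀ a ∈ s, ∃ b, SemiconjBy q a b) (hleft : ∀ b ∈ s, ∃ a, SemiconjBy q a b) :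
    {w | ∃ d, w = q * d} = {w | ∃ d, w = d * q} := by
  ext w
  constructor
  · rintro ⟨a, rfl⟩
    exact exists_semiconjBy_right_of_adjoin_eq_top hs hright a
  · rintro ⟨b, rfl⟩
    obtain ⟨a, hab⟩ := exists_semiconjBy_left_of_adjoin_eq_top hs hleft b
    exact ⟨a, hab.eq.symm⟩

theorem commute_of_adjoin_eq_top (hs : Algebra.adjoin R s = ⊤) (hq : ∀ a ∈ s, Commute q a)
    (a : A) : Commute q a :=
  Algebra.commute_of_mem_adjoin_of_forall_mem_commute (hs ▸ Algebra.mem_top) hq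

end Generators

section Translations

variable {R A : Type*} [CommRing R] [Ring A] [Algebra R A] {t : R} {p q a b : A}

-- The pattern shared by `(p, a, b) = (ux, y, x)` and `(ux, v, -u)`.
theorem semiconjBy_add_two_add_two_mul {g : A} (ht : t + t = 1)
    (hp : p * a = a * p + b * (1 - g) + t • (b * p)) (hg : SemiconjBy g a (a + b)) :
    SemiconjBy (p + 2 + 2 * g) a (a + t • b) := by
  have hga : g * a = a * g + b * g := by rw [hg.eq, add_mul]
  simp only [SemiconjBy, two_mul, add_mul, mul_add, mul_two, smul_mul_assoc, hp, hga, mul_sub,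
    mul_one]
  linear_combination (norm := module) -ht • (b + b * g)

theorem semiconjBy_sq_of_add_self_eq_one (ht : t + t = 1) (ha : SemiconjBy q a (a + t • b))
    (hb : Commute q b) : SemiconjBy (q ^ 2) a (a + b) := by
  have h : SemiconjBy (q * q) a (a + t • b + t • b) :=
    (ha.add_right (hb.smul_right t)).mul_left ha
  rwa [add_assoc, ← add_smul, ht, one_smul, ← sq] at h

theorem commute_mul_units_inv_of_semiconjBy {g : Aˣ} (ha : SemiconjBy q a (a + b))
    (hga : SemiconjBy (g : A) a (a + b)) (hb : Commute q b) (hgb : Commute (g : A) b) :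
    Commute (q * ↑g⁻¹) a := by
  have hsum : Commute (q * ↑g⁻¹) (a + b) := ha.mul_left hga.units_inv_symm_left
  simpa using hsum.sub_right (hb.mul_left hgb.units_inv_left)

end Translations

namespace D

variable {K : Type} [Field K]

theorem adjoin_range_generators :
    Algebra.adjoin K (Set.range fun t => Dmk K (ι K t)) = ⊤ := by
  rw [Set.range_comp' (Dmk K) (ι K), ← AlgHom.map_adjoin, adjoin_range_ι, Algebra.map_top,
    AlgHom.range_eq_top]
  exact RingQuot.mkAlgHom_surjective K (JRel K)

theorem mk_eq_of_rel (K : Type) [Field K] {a b : FreeAlgebra K JGen} (h : JRel K a b) :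
    Dmk K a = Dmk K b :=
  RingQuot.mkAlgHom_rel K h

theorem g_mul_ginv : DG K * DGinv K = 1 := by
  simpa only [map_mul, map_one] using! mk_eq_of_rel K .gginv

theorem ginv_mul_g : DGinv K * DG K = 1 := by
  simpa only [map_mul, map_one] using! mk_eq_of_rel K .ginvg

theorem commute_g_zeta : Commute (DG K) (DZ K) := by
  simpa only [map_mul] using! (mk_eq_of_rel K .zg).symm

theorem commute_g_x : Commute (DG K) (DX K) := by
  simpa only [map_mul] using! mk_eq_of_rel K .gx

theorem commute_g_u : Commute (DG K) (DU K) := by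
  simpa only [map_mul] using! (mk_eq_of_rel K .ug).symm

theorem commute_u_x : Commute (DU K) (DX K) := by
  simpa only [map_mul] using! mk_eq_of_rel K .ux

theorem semiconjBy_g_y : SemiconjBy (DG K) (DY K) (DY K + DX K) := by
  simpa only [map_mul, map_add, ← add_mul] using! mk_eq_of_rel K .gy

theorem v_mul_g : DV K * DG K = DG K * DV K + DG K * DU K := by
  simpa only [map_mul, map_add] using! mk_eq_of_rel K .vg

theorem zeta_mul_x : DZ K * DX K = DX K * DZ K + DX K := by
  simpa only [map_mul, map_add] using! mk_eq_of_rel K .zx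

theorem u_mul_zeta : DU K * DZ K = DZ K * DU K + DU K := by
  simpa only [map_mul, map_add] using! mk_eq_of_rel K .uz

theorem y_mul_x : DY K * DX K = DX K * DY K - (1 / 2 : K) • (DX K * DX K) := by
  simpa only [map_mul, map_sub, map_smul] using! mk_eq_of_rel K .yx

theorem v_mul_u : DV K * DU K = DU K * DV K - (1 / 2 : K) • (DU K * DU K) := by
  simpa only [map_mul, map_sub, map_smul] using! mk_eq_of_rel K .vu

theorem v_mul_x : DV K * DX K = DX K * DV K + (1 - DG K) + DX K * DU K := by
  simpa only [map_mul, map_add, map_sub, map_one] using! mk_eq_of_rel K .vx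

theorem u_mul_y : DU K * DY K = DY K * DU K + (1 - DG K) := by
  simpa only [map_mul, map_add, map_sub, map_one] using! mk_eq_of_rel K .uy

theorem semiconjBy_g_v : SemiconjBy (DG K) (DV K) (DV K + -DU K) := by
  rw [SemiconjBy, add_mul, v_mul_g, neg_mul, commute_g_u.eq, add_neg_cancel_right]

theorem commute_ux_zeta : Commute (DU K * DX K) (DZ K) := by
  have hx : SemiconjBy (DX K) (DZ K + 1) (DZ K) := by
    rw [SemiconjBy, mul_add, mul_one, zeta_mul_x]
  have hu : SemiconjBy (DU K) (DZ K) (DZ K + 1) := by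
    rw [SemiconjBy, add_mul, one_mul, u_mul_zeta]
  have h : Commute (DU K * DX K) (DZ K + 1) := hu.mul_left hx
  simpa using h.sub_right (Commute.one_right _)

theorem ux_mul_y :
    DU K * DX K * DY K = DY K * (DU K * DX K) + DX K * (1 - DG K) +
      (1 / 2 : K) • (DX K * (DU K * DX K)) := by
  have hxy : DX K * DY K = DY K * DX K + (1 / 2 : K) • (DX K * DX K) := by
    rw [y_mul_x, sub_add_cancel]
  have hux : Commute (DU K * DX K) (DX K) := commute_u_x.mul_left (.refl _)
  calc DU K * DX K * DY K
      = DU K * DY K * DX K + (1 / 2 : K) • (DU K * DX K * DX K) := by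
        rw [mul_assoc, hxy, mul_add, mul_smul_comm, ← mul_assoc, ← mul_assoc]
    _ = DY K * (DU K * DX K) + (DX K - DG K * DX K) +
          (1 / 2 : K) • (DX K * (DU K * DX K)) := by
        rw [u_mul_y, add_mul, sub_mul, one_mul, mul_assoc, hux.eq]
    _ = _ := by rw [commute_g_x.eq, mul_sub, mul_one]

theorem v_mul_ux :
    DV K * (DU K * DX K) = DU K * DX K * DV K + DU K * (1 - DG K) +
      DU K * (DU K * DX K) - (1 / 2 : K) • (DU K * (DU K * DX K)) :=
  calc DV K * (DU K * DX K)
      = DU K * (DV K * DX K) - (1 / 2 : K) • (DU K * (DU K * DX K)) := by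
        rw [← mul_assoc, v_mul_u, sub_mul, smul_mul_assoc, mul_assoc, mul_assoc]
    _ = _ := by
        rw [v_mul_x, ← commute_u_x.eq, mul_add, mul_add, mul_assoc (DU K) (DX K)]

/-- The element `q = ux + 2 + 2g` of `D`. -/
noncomputable def q (K : Type) [Field K] : D K := DU K * DX K + 2 + 2 * DG K

/-- The generator `g` as a unit of `D`, with inverse the generator `g⁻¹`. -/
noncomputable def gUnit (K : Type) [Field K] : (D K)ˣ :=
  ⟨DG K, DGinv K, g_mul_ginv, ginv_mul_g⟩

theorem commute_q_of_commute {a : D K} (hux : Commute (DU K * DX K) a) (hg : Commute (DG K) a) :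
    Commute (q K) a :=
  (hux.add_left (Commute.ofNat_left 2 a)).add_left ((Commute.ofNat_left 2 a).mul_left hg)

theorem commute_q_x : Commute (q K) (DX K) :=
  commute_q_of_commute (commute_u_x.mul_left (.refl _)) commute_g_x

theorem commute_q_u : Commute (q K) (DU K) :=
  commute_q_of_commute (.mul_left (.refl _) commute_u_x.symm) commute_g_u

theorem commute_q_g : Commute (q K) (DG K) :=
  commute_q_of_commute (commute_g_u.symm.mul_left commute_g_x.symm) (.refl _)

theorem commute_q_zeta : Commute (q K) (DZ K) :=
  commute_q_of_commute commute_ux_zeta commute_g_zeta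

theorem commute_q_ginv : Commute (q K) (DGinv K) :=
  Commute.units_inv_right (u := gUnit K) commute_q_g

theorem semiconjBy_q_y [NeZero (2 : K)] :
    SemiconjBy (q K) (DY K) (DY K + (1 / 2 : K) • DX K) :=
  semiconjBy_add_two_add_two_mul (add_halves 1) ux_mul_y semiconjBy_g_y

theorem semiconjBy_q_v [NeZero (2 : K)] :
    SemiconjBy (q K) (DV K) (DV K + (1 / 2 : K) • -DU K) := by
  have ht : (1 / 2 : K) + 1 / 2 = 1 := add_halves 1
  refine semiconjBy_add_two_add_two_mul ht ?_ semiconjBy_g_v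
  rw [v_mul_ux, neg_mul, neg_mul]
  linear_combination (norm := module) ht • (DU K * (DU K * DX K))

theorem setOf_q_mul_eq_setOf_mul_q [NeZero (2 : K)] :
    {w | ∃ d, w = q K * d} = {w | ∃ d, w = d * q K} := by
  refine setOf_mul_left_eq_setOf_mul_right_of_adjoin_eq_top
    (adjoin_range_generators (K := K)) ?_ ?_
  · rintro _ ⟨t, rfl⟩
    cases t with
    | u => exact ⟨_, commute_q_u⟩
    | v => exact ⟨_, semiconjBy_q_v⟩
    | zeta => exact ⟨_, commute_q_zeta⟩
    | g => exact ⟨_, commute_q_g⟩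
    | ginv => exact ⟨_, commute_q_ginv⟩
    | x => exact ⟨_, commute_q_x⟩
    | y => exact ⟨_, semiconjBy_q_y⟩
  · have hv := semiconjBy_q_v.sub_right ((commute_q_u (K := K)).neg_right.smul_right (1 / 2 : K))
    have hy := semiconjBy_q_y.sub_right ((commute_q_x (K := K)).smul_right (1 / 2 : K))
    rw [add_sub_cancel_right] at hv hy
    rintro _ ⟨t, rfl⟩
    cases t with
    | u => exact ⟨_, commute_q_u⟩
    | v => exact ⟨_, hv⟩
    | zeta => exact ⟨_, commute_q_zeta⟩
    | g => exact ⟨_, commute_q_g⟩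
    | ginv => exact ⟨_, commute_q_ginv⟩
    | x => exact ⟨_, commute_q_x⟩
    | y => exact ⟨_, hy⟩

theorem commute_q_sq_mul_ginv [NeZero (2 : K)] (d : D K) : Commute (q K ^ 2 * DGinv K) d := by
  have commute_of_fixed {a : D K} (hq : Commute (q K) a) (hg : Commute (DG K) a) :
      Commute (q K ^ 2 * DGinv K) a :=
    (hq.pow_left 2).mul_left (Commute.units_inv_left (u := gUnit K) hg)
  have commute_of_translated {a b : D K} (hqa : SemiconjBy (q K) a (a + (1 / 2 : K) • b))
      (hga : SemiconjBy (DG K) a (a + b)) (hqb : Commute (q K) b) (hgb : Commute (DG K) b) :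
      Commute (q K ^ 2 * DGinv K) a :=
    commute_mul_units_inv_of_semiconjBy (g := gUnit K)
      (semiconjBy_sq_of_add_self_eq_one (add_halves 1) hqa hqb) hga (hqb.pow_left 2) hgb
  refine commute_of_adjoin_eq_top (adjoin_range_generators (K := K)) ?_ d
  rintro _ ⟨t, rfl⟩
  cases t with
  | u => exact commute_of_fixed commute_q_u commute_g_u
  | v =>
    exact commute_of_translated semiconjBy_q_v semiconjBy_g_v commute_q_u.neg_right
      commute_g_u.neg_right
  | zeta => exact commute_of_fixed commute_q_zeta commute_g_zeta
  | g => exact commute_of_fixed commute_q_g (.refl _)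
  | ginv => exact commute_of_fixed commute_q_ginv (g_mul_ginv.trans ginv_mul_g.symm)
  | x => exact commute_of_fixed commute_q_x commute_g_x
  | y => exact commute_of_translated semiconjBy_q_y semiconjBy_g_y commute_q_x commute_g_x

end D

theorem q_normal_z_central_general (K : Type) [Field K] [NeZero (2 : K)] :
    letI q : D K := DU K * DX K + 2 + 2 * DG K
    letI z : D K := q ^ 2 * DGinv K
    q * DX K = DX K * q ∧ q * DU K = DU K * q ∧ q * DG K = DG K * q ∧
    q * DZ K = DZ K * q ∧
    q * DY K = (DY K + (1 / 2 : K) • DX K) * q ∧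
    q * DV K = (DV K - (1 / 2 : K) • DU K) * q ∧
    {w : D K | ∃ d : D K, w = q * d} = {w : D K | ∃ d : D K, w = d * q} ∧
    ∀ d : D K, z * d = d * z := by
  have hv : SemiconjBy (D.q K) (DV K) (DV K - (1 / 2 : K) • DU K) := by
    simpa only [smul_neg, ← sub_eq_add_neg] using D.semiconjBy_q_v (K := K)
  exact ⟨D.commute_q_x, D.commute_q_u, D.commute_q_g, D.commute_q_zeta, D.semiconjBy_q_y, hv,
    D.setOf_q_mul_eq_setOf_mul_q, D.commute_q_sq_mul_ginv⟩

/-- the element `q = ux + 2 + 2g` commutes with `x`, `u`, `g` and `ζ`, satisfies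
`q y = (y + (1/2)x) q` and `q v = (v - (1/2)u) q`, and is a normal element of `D`
(`qD = Dq`); moreover `z = q² g⁻¹` is central in `D`. -/
theorem q_normal_z_central :
    letI q : D k := DU k * DX k + 2 + 2 * DG k
    letI z : D k := q ^ 2 * DGinv k
    q * DX k = DX k * q ∧ q * DU k = DU k * q ∧ q * DG k = DG k * q ∧
    q * DZ k = DZ k * q ∧
    q * DY k = (DY k + (1/2 : k) • DX k) * q ∧
    q * DV k = (DV k - (1/2 : k) • DU k) * q ∧
    {w : D k | ∃ d : D k, w = q * d} = {w : D k | ∃ d : D k, w = d * q} ∧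
    ∀ d : D k, z * d = d * z :=
  q_normal_z_central_general k
end
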